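/- arXiv:1201.0090 — 2 statements merged into one kernel-verified Lean document; each statement's English description precedes it below -/
import Mathlib

section
/- A nonempty subset R of the extended bicyclic semigroup C_Z is a right ideal (i.e., x·s ∈ R for all s ∈ C_Z and x ∈ R) if and only if either R = C_Z or R = {(x,y) ∈ C_Z : x ≥ a} for some a ∈ ℤ. -/
/-!
Right multiplication never lowers the first coordinate, and from `x` it reaches every pair whose
first coordinate is at least `x.1` (`exists_czMul_eq`). So the right ideals are exactly the subsets
that are upward closed in the first coordinate and do not depend on the second one. Such a nonempty
set is a half-plane if its first coordinates are bounded below, and all of `C_Z` otherwise.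
-/

/-- The multiplication of the extended bicyclic semigroup `C_Z` on `ℤ × ℤ`. -/
def czMul (x y : ℤ × ℤ) : ℤ × ℤ :=
  if x.2 < y.1 then (x.1 - x.2 + y.1, y.2)
  else if x.2 = y.1 then (x.1, y.2)
  else (x.1, y.2 + x.2 - y.1)

theorem le_czMul_fst (x s : ℤ × ℤ) : x.1 ≤ (czMul x s).1 := by
  unfold czMul
  split_ifs <;> dsimp only <;> omega

theorem exists_czMul_eq {x p : ℤ × ℤ} (h : x.1 ≤ p.1) : ∃ s, czMul x s = p := by
  -- The first coordinate of `s` solves `x.1 - x.2 + c = p.1`; then `x.2 ≤ c`.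
  refine ⟨(p.1 - x.1 + x.2, p.2), ?_⟩
  unfold czMul
  split_ifs <;> ext <;> dsimp only at * <;> omega

theorem stmt_6 (R : Set (ℤ × ℤ)) (hne : R.Nonempty) :
    (∀ s : ℤ × ℤ, ∀ x ∈ R, czMul x s ∈ R) ↔
      (R = Set.univ ∨ ∃ a : ℤ, R = {p : ℤ × ℤ | a ≤ p.1}) := by
  constructor
  · intro h
    have up : ∀ x ∈ R, ∀ p : ℤ × ℤ, x.1 ≤ p.1 → p ∈ R := by
      intro x hx p hp
      obtain ⟨s, rfl⟩ := exists_czMul_eq hp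
      exact h s x hx
    by_cases hb : ∃ b : ℤ, ∀ x ∈ R, b ≤ x.1
    · right
      obtain ⟨b, hb⟩ := hb
      obtain ⟨x₀, hx₀⟩ := hne
      obtain ⟨a, ⟨x, hx, rfl⟩, hmin⟩ :=
        Int.exists_least_of_bdd (P := fun z => ∃ x ∈ R, x.1 = z)
          ⟨b, by rintro z ⟨x, hx, rfl⟩; exact hb x hx⟩ ⟨x₀.1, x₀, hx₀, rfl⟩
      exact ⟨x.1, Set.ext fun p => ⟨fun hp => hmin _ ⟨p, hp, rfl⟩, up x hx p⟩⟩
    · left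
      push Not at hb
      refine Set.eq_univ_of_forall fun p => ?_
      obtain ⟨x, hx, hlt⟩ := hb p.1
      exact up x hx p hlt.le
  · rintro (rfl | ⟨a, rfl⟩) s x hx
    · trivial
    · exact le_trans hx (le_czMul_fst x s)
end

section
/- Let T be a Hausdorff topological space with a jointly continuous associative multiplication and a two-sided identity 1_T, and let ι : C_Z → T be an injective map with ι(x·y) = ι(x)·ι(y) for all x,y ∈ C_Z whose image is dense in T. Define L = {x ∈ T ∖ ι(C_Z) : ∃ y ∈ C_Z, x·ι(y) ∈ ι(C_Z)} and ↑C_Z = ι(C_Z) ∪ L. Then ↑C_Z is an open subset of T, and hence I = T ∖ ↑C_Z, if nonempty, is closed in T. -/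
/-- The inequations satisfied by `x = (n, m)` and by no other element of `C_Z`. -/
lemma czMul_isolating (n m : ℤ) (x : ℤ × ℤ) :
    (czMul (n + 1, n + 1) (czMul (czMul (n - 1, n - 1) x) (m - 1, m - 1)) ≠
        czMul (czMul (n - 1, n - 1) x) (m - 1, m - 1) ∧
      czMul (czMul (czMul (n - 1, n - 1) x) (m - 1, m - 1)) (m + 1, m + 1) ≠
        czMul (czMul (n - 1, n - 1) x) (m - 1, m - 1) ∧
      czMul (czMul (n - 1, n - 1) x) (m - 1, m - 1) ≠ (n - 1, m - 1) ∧
      czMul (czMul (n - 1, n - 1) x) (m - 1, m - 1) ≠ (n - 1, m) ∧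
      czMul (czMul (n - 1, n - 1) x) (m - 1, m - 1) ≠ (n, m - 1)) ↔ x = (n, m) := by
  obtain ⟨a, b⟩ := x
  have hl : ∀ k c d : ℤ, czMul (k, k) (c, d) = if k ≤ c then (c, d) else (k, d + k - c) := by
    intro k c d
    simp only [czMul]
    split_ifs <;> simp only [Prod.mk.injEq, and_true, true_and] <;> omega
  have hr : ∀ k c d : ℤ, czMul (c, d) (k, k) = if k ≤ d then (c, d) else (c - d + k, k) := by
    intro k c d
    simp only [czMul]
    split_ifs <;> simp only [Prod.mk.injEq, and_true, true_and] <;> omega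
  obtain ⟨c, d, hg, hc, hd, hp⟩ : ∃ c d : ℤ,
      czMul (czMul (n - 1, n - 1) (a, b)) (m - 1, m - 1) = (c, d) ∧ n - 1 ≤ c ∧ m - 1 ≤ d ∧
        ((c = n ∧ d = m) ↔ (a = n ∧ b = m)) := by
    rw [hl]
    split_ifs <;> rw [hr] <;> split_ifs <;> refine ⟨_, _, rfl, ?_, ?_, ?_⟩ <;> omega
  rw [hg, hl, hr]
  split_ifs <;> simp only [ne_eq, Prod.mk.injEq, not_true_eq_false, false_and, and_false,
    false_iff] <;> omega

/-- An open set meeting a dense range in a single point is that singleton. -/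
lemma isOpen_singleton_of_denseRange {X T : Type*} [TopologicalSpace T] [T1Space T] {f : X → T}
    (hf : DenseRange f) {U : Set T} (hU : IsOpen U) {p : X} (h : ∀ x, f x ∈ U ↔ x = p) :
    IsOpen {f p} := by
  convert hU
  refine Set.Subset.antisymm (Set.singleton_subset_iff.2 ((h p).2 rfl)) fun t ht => ?_
  by_contra hne
  obtain ⟨x, hx, hxp⟩ := hf.exists_mem_open (hU.sdiff isClosed_singleton) ⟨t, ht, hne⟩
  exact hxp (by rw [(h x).1 hx]; rfl)

theorem stmt_17 {T : Type*} [TopologicalSpace T] [T2Space T] (mul : T → T → T) (one : T)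
    (hassoc : ∀ a b c : T, mul (mul a b) c = mul a (mul b c))
    (hcont : Continuous fun p : T × T => mul p.1 p.2)
    (hone : ∀ x : T, mul one x = x ∧ mul x one = x)
    (ι : ℤ × ℤ → T) (hinj : Function.Injective ι)
    (hhom : ∀ x y : ℤ × ℤ, ι (czMul x y) = mul (ι x) (ι y))
    (hdense : DenseRange ι)
    (L : Set T)
    (hL : L = {x : T | x ∉ Set.range ι ∧ ∃ y : ℤ × ℤ, mul x (ι y) ∈ Set.range ι}) :
    IsOpen (Set.range ι ∪ L) ∧ IsClosed ((Set.range ι ∪ L)ᶜ) := by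
  have cont {f g : T → T} (hf : Continuous f) (hg : Continuous g) :
      Continuous fun t => mul (f t) (g t) := hcont.comp (hf.prodMk hg)
  have hsing : ∀ p : ℤ × ℤ, IsOpen {ι p} := by
    rintro ⟨n, m⟩
    let g : T → T := fun t => mul (mul (ι (n - 1, n - 1)) t) (ι (m - 1, m - 1))
    have hg : Continuous g := cont (cont continuous_const continuous_id) continuous_const
    have hgι : ∀ x, g (ι x) = ι (czMul (czMul (n - 1, n - 1) x) (m - 1, m - 1)) := fun x => by
      simp only [g, hhom]
    have hne {f h : T → T} (hf : Continuous f) (hh : Continuous h) : IsOpen {t | f t ≠ h t} :=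
      isOpen_ne_fun hf hh
    refine isOpen_singleton_of_denseRange hdense
      ((hne (cont (continuous_const (y := ι (n + 1, n + 1))) hg) hg).inter
        ((hne (cont hg (continuous_const (y := ι (m + 1, m + 1)))) hg).inter
        ((hne hg (continuous_const (y := ι (n - 1, m - 1)))).inter
        ((hne hg (continuous_const (y := ι (n - 1, m)))).inter
        (hne hg (continuous_const (y := ι (n, m - 1)))))))) fun x => ?_
    rw [← czMul_isolating n m x]
    simp only [Set.mem_inter_iff, Set.mem_ofPred_eq, hgι, ← hhom, hinj.ne_iff]
  have hrange : IsOpen (Set.range ι) := by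
    rw [← Set.iUnion_singleton_eq_range]
    exact isOpen_iUnion hsing
  have hup : Set.range ι ∪ L =
      Set.range ι ∪ ⋃ y, (fun t => mul t (ι y)) ⁻¹' Set.range ι := by
    ext t
    simp only [hL, Set.mem_union, Set.mem_ofPred_eq, Set.mem_iUnion, Set.mem_preimage]
    tauto
  have hopen : IsOpen (Set.range ι ∪ L) := by
    rw [hup]
    exact hrange.union
      (isOpen_iUnion fun y => hrange.preimage (cont continuous_id continuous_const))
  exact ⟨hopen, hopen.isClosed_compl⟩
end
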